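/- arXiv:2403.10432 — 2 statements merged into one kernel-verified Lean document; each statement's English description precedes it below -/
import Mathlib

section
/- Let n ≥ 1 be a natural number and z a real number with z > n. Then ∫_z^∞ y^{n-1} e^{-y}/(n-1)! dy ≤ n z^n e^{-z} / (n! (z - n)). -/
open MeasureTheory Real

/-- Gamma tail bound: for `n ≥ 1` and `z > n`,
`∫_z^∞ y^{n-1} e^{-y}/(n-1)! dy ≤ n z^n e^{-z} / (n! (z - n))`. -/
theorem gamma_tail_bound (n : ℕ) (hn : 1 ≤ n) (z : ℝ) (hz : (n : ℝ) < z) :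
    ∫ y in Set.Ioi z, y ^ (n - 1) * Real.exp (-y) / (Nat.factorial (n - 1)) ≤
      (n : ℝ) * z ^ n * Real.exp (-z) / ((Nat.factorial n : ℝ) * (z - n)) := by
  obtain ⟨m, rfl⟩ : ∃ m, n = m + 1 := ⟨n - 1, by omega⟩
  simp only [Nat.add_sub_cancel]
  have hF : (0 : ℝ) < (Nat.factorial m : ℝ) := by exact_mod_cast Nat.factorial_pos m
  have hm : (0 : ℝ) < ((m + 1 : ℕ) : ℝ) := by positivity
  have hd : 0 < z - ((m + 1 : ℕ) : ℝ) := by linarith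
  set N : ℝ := ((m + 1 : ℕ) : ℝ) with hN
  set C : ℝ := 1 / ((Nat.factorial m : ℝ) * (z - N)) with hC
  have hCpos : 0 < C := by positivity
  set G : ℝ → ℝ := fun y => -C * (y ^ (m + 1) * Real.exp (-y)) with hG
  set G' : ℝ → ℝ := fun y => C * (y ^ m * Real.exp (-y) * (y - N)) with hG'
  have hderiv : ∀ y ∈ Set.Ici z, HasDerivAt G (G' y) y := by
    intro y _
    have h1 : HasDerivAt (fun y : ℝ => y ^ (m + 1)) (N * y ^ m) y := by
      simpa [hN] using hasDerivAt_pow (m + 1) y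
    have h2 : HasDerivAt (fun y : ℝ => Real.exp (-y)) (Real.exp (-y) * (-1)) y :=
      (hasDerivAt_neg y).exp
    have h3 := (h1.mul h2).const_mul (-C)
    refine h3.congr_deriv ?_
    simp only [hG']
    ring
  have hpos : ∀ y ∈ Set.Ioi z, 0 ≤ G' y := by
    intro y hy
    have hy' : z < y := hy
    have h0 : 0 ≤ y := by linarith
    have h1 : 0 ≤ y - N := by linarith
    simp only [hG']
    positivity
  have hlim : Filter.Tendsto G Filter.atTop (nhds 0) := by
    simpa [hG] using (tendsto_pow_mul_exp_neg_atTop_nhds_zero (m + 1)).const_mul (-C)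
  have hint := integrableOn_Ioi_deriv_of_nonneg' hderiv hpos hlim
  have heq := integral_Ioi_of_hasDerivAt_of_tendsto' hderiv hint hlim
  have hle : ∫ y in Set.Ioi z, y ^ m * Real.exp (-y) / (Nat.factorial m) ≤
      ∫ y in Set.Ioi z, G' y := by
    refine integral_mono_of_nonneg ?_ hint ?_
    · filter_upwards [ae_restrict_mem measurableSet_Ioi] with y hy
      have hy' : z < y := hy
      have h0 : 0 ≤ y := by linarith
      simp only [Pi.zero_apply]
      positivity
    · filter_upwards [ae_restrict_mem measurableSet_Ioi] with y hy
      have hy' : z < y := hy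
      have h0 : 0 ≤ y := by linarith
      have h2 : y ^ m * Real.exp (-y) / (Nat.factorial m) =
          C * (y ^ m * Real.exp (-y) * (z - N)) := by
        rw [hC]; field_simp
      simp only [hG']
      rw [h2]
      gcongr
  refine hle.trans (le_of_eq ?_)
  rw [heq, Nat.factorial_succ, Nat.cast_mul, ← hN]
  simp only [hG, hC]
  field_simp
  ring
end

section
/- The function f(z) = (z/2)·ln(z) − z − ln Γ(1 + z/2) is nonincreasing on the interval [2, ∞). Equivalently, the map z ↦ z^{z/2} e^{-z} / Γ(1 + z/2) is nonincreasing for z ≥ 2. -/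
open Real

lemma aux_digamma_lower (w : ℝ) (hw : 0 < w) :
    Real.log w ≤ deriv (Real.log ∘ Real.Gamma) (1 + w) := by
  have hd : DifferentiableAt ℝ (Real.log ∘ Real.Gamma) (1 + w) := by
    apply DifferentiableAt.comp
    · exact (Real.differentiableAt_log (Real.Gamma_pos_of_pos (by linarith)).ne')
    · apply Real.differentiableAt_Gamma
      intro m
      have : (0:ℝ) ≤ m := Nat.cast_nonneg m
      linarith
  have h := Real.convexOn_log_Gamma.slope_le_deriv (x := w) (y := 1 + w) (Set.mem_Ioi.2 hw)
    (Set.mem_Ioi.2 (by linarith)) (by linarith) hd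
  rw [slope_def_field] at h
  simp only [Function.comp] at h ⊢
  rw [add_comm 1 w, Real.Gamma_add_one hw.ne',
    Real.log_mul hw.ne' (Real.Gamma_pos_of_pos hw).ne'] at h
  rw [add_comm 1 w]
  have e : (Real.log w + Real.log (Real.Gamma w) - Real.log (Real.Gamma w)) / (w + 1 - w)
      = Real.log w := by
    rw [add_sub_cancel_left, div_one]; ring
  rwa [e] at h

lemma aux_hasDeriv (z : ℝ) (hz : 2 ≤ z) :
    HasDerivAt (fun z : ℝ => z / 2 * Real.log z - z - Real.log (Real.Gamma (1 + z / 2)))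
      (1 / 2 * Real.log z + z / 2 * z⁻¹ - 1
        - deriv (Real.log ∘ Real.Gamma) (1 + z / 2) * (1 / 2)) z := by
  have hd : DifferentiableAt ℝ (Real.log ∘ Real.Gamma) (1 + z / 2) := by
    apply DifferentiableAt.comp
    · exact (Real.differentiableAt_log (Real.Gamma_pos_of_pos (by linarith)).ne')
    · apply Real.differentiableAt_Gamma
      intro m
      have : (0:ℝ) ≤ m := Nat.cast_nonneg m
      linarith
  have h1 : HasDerivAt (fun z : ℝ => z / 2) (1 / 2) z := (hasDerivAt_id z).div_const 2
  have h2 : HasDerivAt (fun z : ℝ => 1 + z / 2) (1 / 2) z := h1.const_add 1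
  have h3 := HasDerivAt.comp z hd.hasDerivAt h2
  exact ((h1.mul (Real.hasDerivAt_log (by linarith))).sub (hasDerivAt_id z)).sub h3

lemma aux_first :
    AntitoneOn (fun z : ℝ => z / 2 * Real.log z - z - Real.log (Real.Gamma (1 + z / 2)))
      (Set.Ici (2 : ℝ)) := by
  apply antitoneOn_of_deriv_nonpos (convex_Ici 2)
  · intro z hz
    exact (aux_hasDeriv z hz).continuousAt.continuousWithinAt
  · intro z hz
    exact (aux_hasDeriv z (interior_subset hz)).differentiableAt.differentiableWithinAt
  · intro z hz
    have hz2 : 2 ≤ z := interior_subset hz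
    rw [(aux_hasDeriv z hz2).deriv]
    have h := aux_digamma_lower (z / 2) (by linarith)
    rw [Real.log_div (by linarith) (by norm_num)] at h
    have e : z / 2 * z⁻¹ = 1 / 2 := by
      have : z ≠ 0 := by linarith
      field_simp
    have := Real.log_two_lt_d9
    rw [e]
    linarith

/-- The function `z ↦ (z/2) ln z − z − ln Γ(1 + z/2)` is nonincreasing on `[2, ∞)`;
equivalently, `z ↦ z^{z/2} e^{-z} / Γ(1 + z/2)` is nonincreasing on `[2, ∞)`. -/
theorem antitone_gamma_tail_bound_fn :
    AntitoneOn (fun z : ℝ => z / 2 * Real.log z - z - Real.log (Real.Gamma (1 + z / 2)))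
      (Set.Ici (2 : ℝ)) ∧
    AntitoneOn (fun z : ℝ => z ^ (z / 2) * Real.exp (-z) / Real.Gamma (1 + z / 2))
      (Set.Ici (2 : ℝ)) := by
  refine ⟨aux_first, ?_⟩
  have key : ∀ z : ℝ, 2 ≤ z → z ^ (z / 2) * Real.exp (-z) / Real.Gamma (1 + z / 2)
      = Real.exp (z / 2 * Real.log z - z - Real.log (Real.Gamma (1 + z / 2))) := by
    intro z hz
    rw [Real.exp_sub, Real.exp_log (Real.Gamma_pos_of_pos (by linarith)),
      Real.rpow_def_of_pos (by linarith), ← Real.exp_add]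
    congr 2
    ring
  intro a ha b hb hab
  simp only
  rw [key a ha, key b hb]
  exact Real.exp_le_exp.2 (aux_first ha hb hab)
end
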